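/- arXiv:2102.02400 — 5 statements merged into one kernel-verified Lean document; each statement's English description precedes it below -/
import Mathlib

section
/- Let C ≥ 2 and m ≥ 1. Let T and T⋆ be invertible C×C real matrices that are column stochastic and diagonally dominant (T_ii > T_ji and (T⋆)_ii > (T⋆)_ji for all j ≠ i). Let H and H⋆ be C×m real matrices with nonnegative entries whose columns each sum to 1. Assume (i) T⋆ H⋆ = T H, (ii) H is sufficiently scattered, and (iii) |det T⋆| ≤ |det T|. Then T⋆ = T and H⋆ = H. -/
open Matrix BigOperators

/-- Euclidean norm of a vector in `ℝ^C`. -/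
noncomputable def euclNorm {C : ℕ} (v : Fin C → ℝ) : ℝ :=
  Real.sqrt (∑ i, v i ^ 2)

/-- The conical hull of the columns of a matrix `M`. -/
def coneOf {C m : ℕ} (M : Matrix (Fin C) (Fin m) ℝ) : Set (Fin C → ℝ) :=
  {v | ∃ α : Fin m → ℝ, (∀ j, 0 ≤ α j) ∧ v = M.mulVec α}

/-- The second-order cone `R = {v : ∑ i, v i ≥ √(C-1) ‖v‖₂}`. -/
noncomputable def Rcone (C : ℕ) : Set (Fin C → ℝ) :=
  {v | Real.sqrt ((C : ℝ) - 1) * euclNorm v ≤ ∑ i, v i}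

/-- `Q` is a permutation matrix. -/
def IsPermMatrix {C : ℕ} (Q : Matrix (Fin C) (Fin C) ℝ) : Prop :=
  ∃ σ : Equiv.Perm (Fin C), ∀ i j, Q i j = if i = σ j then 1 else 0

/-- `H` is sufficiently scattered. -/
noncomputable def SuffScattered {C m : ℕ} (H : Matrix (Fin C) (Fin m) ℝ) : Prop :=
  Rcone C ⊆ coneOf H ∧
    ∀ Q : Matrix (Fin C) (Fin C) ℝ, Qᵀ * Q = 1 → ¬ IsPermMatrix Q →
      ¬ (coneOf H ⊆ coneOf Q)

/-- `T` is column stochastic. -/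
def ColStochastic {C : ℕ} (T : Matrix (Fin C) (Fin C) ℝ) : Prop :=
  (∀ i j, 0 ≤ T i j) ∧ ∀ j, ∑ i, T i j = 1

/-- `T` is diagonally dominant in the label-noise sense: `T_ii > T_ji` for `j ≠ i`. -/
def DiagDominant {C : ℕ} (T : Matrix (Fin C) (Fin C) ℝ) : Prop :=
  ∀ i j, j ≠ i → T j i < T i i

/-- The dual cone of a set `S ⊆ ℝ^C`. -/
def dualCone {C : ℕ} (S : Set (Fin C → ℝ)) : Set (Fin C → ℝ) :=
  {y | ∀ x ∈ S, 0 ≤ ∑ i, y i * x i}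

/-!
Put `A = T⋆⁻¹ T`. Its columns sum to one, `1 ≤ |det A|`, and `A H = H⋆` is nonnegative, so every
row of `A` lies in the dual cone of `cone H ⊇ R`, hence has Euclidean norm at most its sum.
Hadamard's inequality and AM-GM then squeeze `1 ≤ |det A| ≤ ∏ ‖row i‖ ≤ ∏ (sum of row i) ≤ 1`,
so all row sums are one, and equality in Hadamard makes `A` orthogonal. Now `H = Aᵀ H⋆` puts
`cone H` inside `cone Aᵀ`, so `A` is a permutation matrix by the second half of scatteredness,
and diagonal dominance leaves only the identity permutation.
-/

theorem eq_one_of_one_le_prod_of_sum_le_card {ι : Type*} {s : Finset ι} {x : ι → ℝ}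
    (hx : ∀ i ∈ s, 0 ≤ x i) (hprod : 1 ≤ ∏ i ∈ s, x i) (hsum : ∑ i ∈ s, x i ≤ s.card) :
    ∀ i ∈ s, x i = 1 := by
  have hpos : ∀ i ∈ s, 0 < x i := fun i hi =>
    (hx i hi).lt_of_ne' (Finset.prod_ne_zero_iff.1 (one_pos.trans_le hprod).ne' i hi)
  have hgap : ∀ i ∈ s, 0 ≤ x i - 1 - Real.log (x i) := fun i hi =>
    sub_nonneg.2 (Real.log_le_sub_one_of_pos (hpos i hi))
  have hlog : 0 ≤ ∑ i ∈ s, Real.log (x i) := by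
    rw [← Real.log_prod fun i hi => (hpos i hi).ne']
    exact Real.log_nonneg hprod
  have hgap_sum : ∑ i ∈ s, (x i - 1 - Real.log (x i)) ≤ 0 := by
    simp only [Finset.sum_sub_distrib, Finset.sum_const, nsmul_one]
    linarith
  have hgap_eq := (Finset.sum_eq_zero_iff_of_nonneg hgap).1
    (hgap_sum.antisymm (Finset.sum_nonneg hgap))
  intro i hi
  by_contra hne
  exact (Real.log_lt_sub_one_of_pos (hpos i hi) hne).ne' (sub_eq_zero.1 (hgap_eq i hi))

section Determinant

variable {n 𝕜 : Type*} [Fintype n] [DecidableEq n] [RCLike 𝕜]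

theorem norm_det_le_prod_norm_row (A : Matrix n n 𝕜) :
    ‖A.det‖ ≤ ∏ i, ‖WithLp.toLp 2 (A i)‖ := by
  let : LinearOrder n := LinearOrder.lift' _ (Fintype.equivFin n).injective
  let : LocallyFiniteOrderBot n := LocallyFiniteOrderBot.ofIic n (fun i => {j | j ≤ i}) (by simp)
  let e := EuclideanSpace.basisFun n 𝕜
  let v : n → EuclideanSpace 𝕜 n := fun i => WithLp.toLp 2 (A i)
  let b := InnerProductSpace.gramSchmidtOrthonormalBasis (finrank_euclideanSpace (𝕜 := 𝕜)) v
  have hdet_std : e.toBasis.det v = A.det := by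
    rw [← det_transpose]
    rfl
  have hdet : A.det = e.toBasis.det b * b.toBasis.det v := by
    simpa [hdet_std] using DFunLike.congr_fun (e.toBasis.det.eq_smul_basis_det b.toBasis) v
  rw [hdet, norm_mul, e.det_to_matrix_orthonormalBasis,
    InnerProductSpace.gramSchmidtOrthonormalBasis_det, one_mul, norm_prod]
  gcongr with i
  simpa using norm_inner_le_norm (𝕜 := 𝕜) (b i) (v i)

open scoped ComplexOrder in
theorem eq_one_of_posSemidef_of_one_le_det_of_trace_le_card {M : Matrix n n 𝕜}
    (hM : M.PosSemidef) (hdet : 1 ≤ RCLike.re M.det)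
    (htrace : RCLike.re M.trace ≤ Fintype.card n) : M = 1 := by
  have hherm := hM.isHermitian
  rw [hherm.det_eq_prod_eigenvalues, ← RCLike.ofReal_prod, RCLike.ofReal_re] at hdet
  rw [hherm.trace_eq_sum_eigenvalues, ← RCLike.ofReal_sum, RCLike.ofReal_re] at htrace
  have heig : hherm.eigenvalues = 1 := funext fun i =>
    eq_one_of_one_le_prod_of_sum_le_card (fun i _ => hM.eigenvalues_nonneg i) hdet htrace i
      (Finset.mem_univ i)
  rw [hherm.spectral_theorem, heig]
  simp [Function.comp_def]

open scoped ComplexOrder in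
theorem mul_conjTranspose_self_eq_one_of_one_le_norm_det {A : Matrix n n 𝕜}
    (hdet : 1 ≤ ‖A.det‖) (hrow : ∀ i, ‖WithLp.toLp 2 (A i)‖ ≤ 1) : A * Aᴴ = 1 := by
  refine eq_one_of_posSemidef_of_one_le_det_of_trace_le_card
    (posSemidef_self_mul_conjTranspose A) ?_ ?_
  · rw [det_mul, det_conjTranspose, RCLike.star_def, RCLike.mul_conj, ← RCLike.ofReal_pow,
      RCLike.ofReal_re]
    exact one_le_pow₀ hdet
  · have hdiag : ∀ i, RCLike.re ((A * Aᴴ) i i) ≤ 1 := fun i => calc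
      RCLike.re ((A * Aᴴ) i i) = ‖WithLp.toLp 2 (A i)‖ ^ 2 := by
        simp [mul_apply, EuclideanSpace.norm_sq_eq, RCLike.mul_conj, -map_pow,
          ← RCLike.ofReal_pow]
      _ ≤ 1 := pow_le_one₀ (norm_nonneg _) (hrow i)
    simpa [trace] using Finset.sum_le_sum fun i (_ : i ∈ Finset.univ) => hdiag i

theorem mul_transpose_self_eq_one_of_norm_row_le_sum {A : Matrix n n ℝ} (hdet : 1 ≤ |A.det|)
    (hsum : ∑ i, ∑ j, A i j ≤ Fintype.card n)
    (hrow : ∀ i, ‖WithLp.toLp 2 (A i)‖ ≤ ∑ j, A i j) : A * Aᵀ = 1 := by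
  have hprod : 1 ≤ ∏ i, ∑ j, A i j := calc
    1 ≤ |A.det| := hdet
    _ ≤ ∏ i, ‖WithLp.toLp 2 (A i)‖ := norm_det_le_prod_norm_row A
    _ ≤ ∏ i, ∑ j, A i j := Finset.prod_le_prod (fun _ _ => norm_nonneg _) fun i _ => hrow i
  have hrow_sum : ∀ i, ∑ j, A i j = 1 := fun i =>
    eq_one_of_one_le_prod_of_sum_le_card (fun i _ => (norm_nonneg _).trans (hrow i)) hprod hsum i
      (Finset.mem_univ i)
  rw [← conjTranspose_eq_transpose_of_trivial]
  exact mul_conjTranspose_self_eq_one_of_one_le_norm_det hdet fun i => hrow_sum i ▸ hrow i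

end Determinant

section Cone

variable {C k m : ℕ}

theorem euclNorm_eq_norm (v : Fin C → ℝ) : euclNorm v = ‖WithLp.toLp 2 v‖ := by
  simp [euclNorm, EuclideanSpace.norm_eq]

theorem euclNorm_sq (v : Fin C → ℝ) : euclNorm v ^ 2 = ∑ i, v i ^ 2 :=
  Real.sq_sqrt (Finset.sum_nonneg fun _ _ => sq_nonneg _)

theorem le_euclNorm (v : Fin C → ℝ) (i : Fin C) : v i ≤ euclNorm v :=
  Real.le_sqrt_of_sq_le <|
    Finset.single_le_sum (f := fun i => v i ^ 2) (fun _ _ => sq_nonneg _) (Finset.mem_univ i)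

theorem mem_Rcone_iff {v : Fin C → ℝ} :
    v ∈ Rcone C ↔ 0 ≤ ∑ i, v i ∧ ((C : ℝ) - 1) * ∑ i, v i ^ 2 ≤ (∑ i, v i) ^ 2 := by
  rw [Rcone, Set.mem_ofPred_eq, euclNorm, ← Real.sqrt_mul' _ (by positivity), Real.sqrt_le_iff]

/-- For `y` on the boundary of the dual cone, where `euclNorm y = ∑ i, y i`, this is the element of
`Rcone C` orthogonal to `y`. -/
theorem euclNorm_sub_mem_Rcone (y : Fin C → ℝ) : (fun i => euclNorm y - y i) ∈ Rcone C := by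
  have hsum : ∑ i, (euclNorm y - y i) = C * euclNorm y - ∑ i, y i := by simp
  have hsum_sq : ∑ i, (euclNorm y - y i) ^ 2 =
      (C + 1) * euclNorm y ^ 2 - 2 * euclNorm y * ∑ i, y i := by
    simp only [sub_sq, Finset.sum_add_distrib, Finset.sum_sub_distrib, ← Finset.mul_sum,
      ← euclNorm_sq y, Finset.sum_const, Finset.card_univ, Fintype.card_fin, nsmul_eq_mul]
    ring
  refine mem_Rcone_iff.2 ⟨Finset.sum_nonneg fun i _ => sub_nonneg.2 (le_euclNorm y i), ?_⟩
  rw [hsum, hsum_sq]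
  linarith [sq_nonneg (euclNorm y - ∑ i, y i)]

theorem euclNorm_le_sum_of_mem_dualCone_Rcone {y : Fin C → ℝ} (hy : y ∈ dualCone (Rcone C)) :
    euclNorm y ≤ ∑ i, y i := by
  have hpair : 0 ≤ euclNorm y * (∑ i, y i - euclNorm y) := calc
    0 ≤ ∑ i, y i * (euclNorm y - y i) := hy _ (euclNorm_sub_mem_Rcone y)
    _ = euclNorm y * (∑ i, y i - euclNorm y) := by
      simp only [mul_sub, Finset.sum_sub_distrib, ← Finset.sum_mul, ← pow_two, euclNorm_sq]
      ring
  obtain hzero | hpos := (show 0 ≤ euclNorm y from Real.sqrt_nonneg _).eq_or_lt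
  · rw [euclNorm_eq_norm, eq_comm, norm_eq_zero, WithLp.toLp_eq_zero] at hzero
    simp [hzero, euclNorm]
  · exact sub_nonneg.1 (nonneg_of_mul_nonneg_right hpair hpos)

theorem dualCone_antitone : Antitone (dualCone (C := C)) :=
  fun _ _ hST _ hy x hx => hy x (hST hx)

theorem mem_dualCone_coneOf {M : Matrix (Fin C) (Fin m) ℝ} {y : Fin C → ℝ} (hy : 0 ≤ y ᵥ* M) :
    y ∈ dualCone (coneOf M) := by
  rintro _ ⟨α, hα, rfl⟩
  change 0 ≤ y ⬝ᵥ M *ᵥ α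
  rw [dotProduct_mulVec]
  exact dotProduct_nonneg_of_nonneg hy hα

theorem coneOf_mul_subset (M : Matrix (Fin C) (Fin k) ℝ) {N : Matrix (Fin k) (Fin m) ℝ}
    (hN : ∀ i j, 0 ≤ N i j) : coneOf (M * N) ⊆ coneOf M := by
  rintro _ ⟨α, hα, rfl⟩
  exact ⟨N *ᵥ α, fun i => dotProduct_nonneg_of_nonneg (hN i) hα, (mulVec_mulVec α M N).symm⟩

end Cone

section Identifiability

variable {C m : ℕ} {T Tstar : Matrix (Fin C) (Fin C) ℝ} {H Hstar : Matrix (Fin C) (Fin m) ℝ}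

theorem IsPermMatrix.exists_transpose_eq_permMatrix {Q : Matrix (Fin C) (Fin C) ℝ}
    (hQ : IsPermMatrix Q) : ∃ σ : Equiv.Perm (Fin C), Qᵀ = σ.permMatrix ℝ := by
  obtain ⟨σ, hσ⟩ := hQ
  refine ⟨σ, ?_⟩
  ext i j
  simp [hσ, PEquiv.toMatrix_apply, eq_comm]

theorem SuffScattered.exists_eq_permMatrix (hH : SuffScattered H)
    {A : Matrix (Fin C) (Fin C) ℝ} (hdet : 1 ≤ |A.det|) (hsum : ∑ i, ∑ j, A i j ≤ C)
    (hAH : ∀ i j, 0 ≤ (A * H) i j) : ∃ σ : Equiv.Perm (Fin C), A = σ.permMatrix ℝ := by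
  have hrow : ∀ i, A i ∈ dualCone (Rcone C) := fun i =>
    dualCone_antitone hH.1 (mem_dualCone_coneOf fun j => hAH i j)
  have horth : A * Aᵀ = 1 :=
    mul_transpose_self_eq_one_of_norm_row_le_sum hdet (by simpa using hsum) fun i =>
      euclNorm_eq_norm (A i) ▸ euclNorm_le_sum_of_mem_dualCone_Rcone (hrow i)
  have hcone : coneOf H ⊆ coneOf Aᵀ := by
    have hH_eq : Aᵀ * (A * H) = H := by
      rw [← Matrix.mul_assoc, mul_eq_one_comm.1 horth, Matrix.one_mul]
    exact hH_eq ▸ coneOf_mul_subset Aᵀ hAH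
  have hperm : IsPermMatrix Aᵀ := by
    by_contra hnot
    exact hH.2 Aᵀ (by rwa [transpose_transpose]) hnot hcone
  exact hperm.exists_transpose_eq_permMatrix

theorem SuffScattered.exists_perm_of_mul_eq (hH : SuffScattered H) (hTstar : IsUnit Tstar.det)
    (hTsum : ∀ j, ∑ i, T i j = 1) (hTstarsum : ∀ j, ∑ i, Tstar i j = 1)
    (hHstar : ∀ i j, 0 ≤ Hstar i j) (heq : Tstar * Hstar = T * H)
    (hdet : |Tstar.det| ≤ |T.det|) :
    ∃ σ : Equiv.Perm (Fin C), T = Tstar.submatrix id σ ∧ H = Hstar.submatrix σ id := by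
  obtain ⟨A, rfl⟩ : ∃ A, T = Tstar * A :=
    ⟨Tstar⁻¹ * T, (mul_nonsing_inv_cancel_left _ _ hTstar).symm⟩
  obtain rfl : Hstar = A * H := by
    rw [← nonsing_inv_mul_cancel_left _ Hstar hTstar, heq, Matrix.mul_assoc,
      nonsing_inv_mul_cancel_left _ _ hTstar]
  have hAsum : ∑ i, ∑ j, A i j ≤ C := by
    have hcol : ∀ j, ∑ i, A i j = 1 := fun j => by
      rw [← hTsum j]
      simp only [mul_apply]
      rw [Finset.sum_comm]
      simp only [← Finset.sum_mul, hTstarsum, one_mul]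
    calc ∑ i, ∑ j, A i j = ∑ j, ∑ i, A i j := Finset.sum_comm
      _ ≤ C := by simp [hcol]
  have hAdet : 1 ≤ |A.det| := by
    rw [det_mul, abs_mul] at hdet
    exact (le_mul_iff_one_le_right (abs_pos.2 hTstar.ne_zero)).1 hdet
  obtain ⟨σ, rfl⟩ := hH.exists_eq_permMatrix hAdet hAsum hHstar
  exact ⟨σ.symm, PEquiv.mul_toMatrix_toPEquiv _ _, by simp [PEquiv.toMatrix_toPEquiv_mul]⟩

theorem DiagDominant.eq_one_of_submatrix {σ : Equiv.Perm (Fin C)} (hT : DiagDominant T)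
    (hTσ : DiagDominant (T.submatrix id σ)) : σ = 1 := by
  ext i : 1
  by_contra hne
  exact (hT (σ i) i (Ne.symm hne)).asymm (hTσ i (σ i) hne)

theorem volume_minimization_identifiability_general (hTstar : IsUnit Tstar.det)
    (hTsum : ∀ j, ∑ i, T i j = 1) (hTstarsum : ∀ j, ∑ i, Tstar i j = 1)
    (hTdd : DiagDominant T) (hTstardd : DiagDominant Tstar)
    (hHstar : ∀ i j, 0 ≤ Hstar i j) (heq : Tstar * Hstar = T * H) (hH : SuffScattered H)
    (hdet : |Tstar.det| ≤ |T.det|) :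
    Tstar = T ∧ Hstar = H := by
  obtain ⟨σ, rfl, rfl⟩ := hH.exists_perm_of_mul_eq hTstar hTsum hTstarsum hHstar heq hdet
  obtain rfl := hTstardd.eq_one_of_submatrix hTdd
  exact ⟨rfl, rfl⟩

end Identifiability

/-- Theorem 1 (matrix form): volume minimization identifies the true transition matrix
and clean posterior under the sufficiently scattered assumption. -/
theorem volume_minimization_identifiability
    {C m : ℕ} (hC : 2 ≤ C) (hm : 1 ≤ m)
    (T Tstar : Matrix (Fin C) (Fin C) ℝ)
    (hTinv : IsUnit T.det) (hTstarinv : IsUnit Tstar.det)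
    (hTcs : ColStochastic T) (hTstarcs : ColStochastic Tstar)
    (hTdd : DiagDominant T) (hTstardd : DiagDominant Tstar)
    (H Hstar : Matrix (Fin C) (Fin m) ℝ)
    (hHnn : ∀ i j, 0 ≤ H i j) (hHstarnn : ∀ i j, 0 ≤ Hstar i j)
    (hHcol : ∀ j, ∑ i, H i j = 1) (hHstarcol : ∀ j, ∑ i, Hstar i j = 1)
    (heq : Tstar * Hstar = T * H)
    (hscatter : SuffScattered H)
    (hdet : |Tstar.det| ≤ |T.det|) :
    Tstar = T ∧ Hstar = H :=
  volume_minimization_identifiability_general hTstarinv hTcs.2 hTstarcs.2 hTdd hTstardd hHstarnn heq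
    hscatter hdet
end

section
/- Let C ≥ 2 and let H be a C×m real matrix with nonnegative entries such that every standard basis vector e_1, …, e_C of ℝ^C appears as a column of H. Then H is sufficiently scattered, i.e. (1) R ⊆ cone(H) and (2) for every real orthogonal C×C matrix Q that is not a permutation matrix, cone(H) is not a subset of cone(Q). -/
open Matrix BigOperators

/-!
Anchor points force `coneOf H` to contain the nonnegative orthant.
If some `v ∈ Rcone C` had a negative coordinate, Cauchy–Schwarz on the other `C - 1` coordinates
would contradict the inequality defining `Rcone C`. If the orthant lies in `coneOf Q` with `Q`
orthogonal, then each row `Qᵀ eᵢ` of `Q` is nonnegative; orthogonal nonnegative vectors have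
disjoint supports, which leaves one nonzero entry, equal to `1`, in each row and column.
-/

theorem mul_eq_zero_of_dotProduct_eq_zero {n R : Type*} [Fintype n] [Semiring R] [PartialOrder R]
    [IsOrderedRing R] {v w : n → R} (hv : 0 ≤ v) (hw : 0 ≤ w) (h : v ⬝ᵥ w = 0) (i : n) :
    v i * w i = 0 :=
  (Finset.sum_eq_zero_iff_of_nonneg fun j _ => mul_nonneg (hv j) (hw j)).1 h i
    (Finset.mem_univ i)

section OrderedRing

variable {ι n R : Type*} [CommRing R] [LinearOrder R] [IsStrictOrderedRing R]

theorem nonneg_of_card_sub_one_mul_sum_sq_le_sq_sum {s : Finset ι} {f : ι → R}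
    (hsum : 0 ≤ ∑ i ∈ s, f i)
    (hsq : ((s.card : R) - 1) * ∑ i ∈ s, f i ^ 2 ≤ (∑ i ∈ s, f i) ^ 2)
    {k : ι} (hk : k ∈ s) : 0 ≤ f k := by
  classical
  by_contra! hneg
  set t := s.erase k
  have hcard : (s.card : R) - 1 = t.card := by
    rw [← Finset.card_erase_add_one hk, Nat.cast_add_one, add_sub_cancel_right]
  rw [← Finset.add_sum_erase s f hk] at hsum hsq
  rw [← Finset.add_sum_erase s (fun i => f i ^ 2) hk, hcard] at hsq
  have hcauchy : (∑ i ∈ t, f i) ^ 2 ≤ t.card * ∑ i ∈ t, f i ^ 2 := sq_sum_le_card_mul_sum_sq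
  have hterm : 0 ≤ (t.card : R) * f k ^ 2 := by positivity
  have hprod : f k * (f k + 2 * ∑ i ∈ t, f i) < 0 :=
    mul_neg_of_neg_of_pos hneg (by linarith)
  have hprod_nonneg : 0 ≤ f k * (f k + 2 * ∑ i ∈ t, f i) := by linarith
  exact hprod.not_ge hprod_nonneg

variable [Fintype n] [DecidableEq n] {Q : Matrix n n R}

theorem existsUnique_ne_zero_of_transpose_mul_self_eq_one (hQ : Qᵀ * Q = 1)
    (hnn : ∀ i j, 0 ≤ Q i j) (j : n) : ∃! i, Q i j ≠ 0 := by
  have hcol : ∃ i, Q i j ≠ 0 := by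
    by_contra! hzero
    have hdiag : (Qᵀ * Q) j j = 1 := by rw [hQ, Matrix.one_apply_eq]
    simp [Matrix.mul_apply, hzero] at hdiag
  obtain ⟨i, hi⟩ := hcol
  refine ⟨i, hi, fun i' hi' => ?_⟩
  by_contra hne
  have horth : Q i' ⬝ᵥ Q i = 0 := calc
    Q i' ⬝ᵥ Q i = (Q * Qᵀ) i' i := rfl
    _ = 0 := by rw [mul_eq_one_comm.1 hQ, Matrix.one_apply_ne hne]
  exact mul_ne_zero hi' hi (mul_eq_zero_of_dotProduct_eq_zero (hnn i') (hnn i) horth j)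

theorem exists_eq_permMatrix_of_transpose_mul_self_eq_one (hQ : Qᵀ * Q = 1)
    (hnn : ∀ i j, 0 ≤ Q i j) : ∃ σ : Equiv.Perm n, Q = σ.permMatrix R := by
  have hQ' : Q * Qᵀ = 1 := mul_eq_one_comm.1 hQ
  choose σ hσ hσ_unique using
    existsUnique_ne_zero_of_transpose_mul_self_eq_one (Q := Qᵀ) hQ' fun i j => hnn j i
  have hinj : Function.Injective σ := fun i i' h =>
    (existsUnique_ne_zero_of_transpose_mul_self_eq_one hQ hnn (σ i)).unique (hσ i)
      (h ▸ hσ i')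
  have hzero (i j) (hj : j ≠ σ i) : Q i j = 0 := by_contra fun h => hj (hσ_unique i j h)
  have hone (i) : Q i (σ i) = 1 := by
    have hnorm : Q i (σ i) ^ 2 = 1 := calc
      Q i (σ i) ^ 2 = ∑ j, Q i j * Q i j := by
        rw [Finset.sum_eq_single (σ i) (fun j _ hj => by rw [hzero i j hj, zero_mul])
          (fun h => absurd (Finset.mem_univ _) h), sq]
      _ = (Q * Qᵀ) i i := rfl
      _ = 1 := by rw [hQ', Matrix.one_apply_eq]
    exact (pow_eq_one_iff_of_nonneg (hnn i (σ i)) two_ne_zero).1 hnorm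
  refine ⟨Equiv.ofBijective σ (Finite.injective_iff_bijective.1 hinj), ?_⟩
  ext i j
  simp only [PEquiv.toMatrix_toPEquiv_apply, Equiv.ofBijective_apply]
  obtain rfl | hj := eq_or_ne j (σ i)
  · rw [hone, Pi.single_eq_same]
  · rw [hzero i j hj, Pi.single_eq_of_ne hj]

end OrderedRing

section Cone

variable {C m : ℕ}

theorem nonneg_of_mem_Rcone {v : Fin C → ℝ} (hv : v ∈ Rcone C) : 0 ≤ v := by
  intro k
  have hC : (0 : ℝ) ≤ (C : ℝ) - 1 := sub_nonneg.2 (Nat.one_le_cast.2 k.pos)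
  have hnorm : 0 ≤ √((C : ℝ) - 1) * euclNorm v := by unfold euclNorm; positivity
  have hsq : ((C : ℝ) - 1) * ∑ i, v i ^ 2 ≤ (∑ i, v i) ^ 2 := calc
    ((C : ℝ) - 1) * ∑ i, v i ^ 2 = (√((C : ℝ) - 1) * euclNorm v) ^ 2 := by
      rw [euclNorm, mul_pow, Real.sq_sqrt hC, Real.sq_sqrt (by positivity)]
    _ ≤ (∑ i, v i) ^ 2 := pow_le_pow_left₀ hnorm hv 2
  exact nonneg_of_card_sub_one_mul_sum_sq_le_sq_sum (hnorm.trans hv)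
    (by rwa [Finset.card_fin]) (Finset.mem_univ k)

theorem mem_coneOf_of_mul_eq_one {M : Matrix (Fin C) (Fin m) ℝ} {N : Matrix (Fin m) (Fin C) ℝ}
    (hMN : M * N = 1) (hN : ∀ i j, 0 ≤ N i j) {v : Fin C → ℝ} (hv : 0 ≤ v) : v ∈ coneOf M :=
  ⟨N *ᵥ v, fun j => dotProduct_nonneg_of_nonneg (hN j) hv, by
    rw [Matrix.mulVec_mulVec, hMN, Matrix.one_mulVec]⟩

theorem mulVec_nonneg_of_mem_coneOf {M : Matrix (Fin C) (Fin m) ℝ}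
    {N : Matrix (Fin m) (Fin C) ℝ} (hNM : N * M = 1) {v : Fin C → ℝ} (hv : v ∈ coneOf M) :
    0 ≤ N *ᵥ v := by
  obtain ⟨α, hα, rfl⟩ := hv
  rwa [Matrix.mulVec_mulVec, hNM, Matrix.one_mulVec]

theorem IsPermMatrix.of_Ici_subset_coneOf {Q : Matrix (Fin C) (Fin C) ℝ} (hQ : Qᵀ * Q = 1)
    (hcone : Set.Ici 0 ⊆ coneOf Q) : IsPermMatrix Q := by
  have hnn (i j) : 0 ≤ Q i j := by
    have hrow : 0 ≤ Qᵀ *ᵥ Pi.single i 1 :=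
      mulVec_nonneg_of_mem_coneOf hQ (hcone (Pi.single_nonneg.2 zero_le_one))
    rw [Matrix.mulVec_single_one] at hrow
    exact hrow j
  obtain ⟨σ, rfl⟩ := exists_eq_permMatrix_of_transpose_mul_self_eq_one hQ hnn
  refine ⟨σ.symm, fun i j => ?_⟩
  simp only [PEquiv.toMatrix_toPEquiv_apply, Pi.single_apply, Equiv.eq_symm_apply, eq_comm]

theorem SuffScattered.of_Ici_subset_coneOf {H : Matrix (Fin C) (Fin m) ℝ}
    (hH : Set.Ici 0 ⊆ coneOf H) : SuffScattered H :=
  ⟨fun _ hv => hH (nonneg_of_mem_Rcone hv), fun _ hQ hperm hsub =>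
    hperm (.of_Ici_subset_coneOf hQ (hH.trans hsub))⟩

end Cone

theorem anchor_points_imply_sufficiently_scattered_general
    {C m : ℕ} (H : Matrix (Fin C) (Fin m) ℝ)
    (hanchor : ∀ i : Fin C, ∃ j : Fin m, (fun k => H k j) = Pi.single i 1) :
    SuffScattered H := by
  choose f hf using hanchor
  let N : Matrix (Fin m) (Fin C) ℝ := (1 : Matrix (Fin m) (Fin m) ℝ).submatrix id f
  have hHN : H * N = 1 := calc
    H * N = H.submatrix id f := Matrix.mul_submatrix_one (.refl _) f H
    _ = 1 := by
      ext k i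
      exact (congrFun (hf i) k).trans (by rw [Pi.single_apply, Matrix.one_apply])
  have hN (j i) : 0 ≤ N j i := Matrix.zero_le_one_elem j (f i)
  exact .of_Ici_subset_coneOf fun _ hv => mem_coneOf_of_mul_eq_one hHN hN hv

/-- Proposition 1 (sufficiency): if the columns of a nonnegative matrix `H` include all
standard basis vectors, then `H` is sufficiently scattered. -/
theorem anchor_points_imply_sufficiently_scattered
    {C m : ℕ} (hC : 2 ≤ C) (H : Matrix (Fin C) (Fin m) ℝ)
    (hHnn : ∀ i j, 0 ≤ H i j)
    (hanchor : ∀ i : Fin C, ∃ j : Fin m, (fun k => H k j) = Pi.single i 1) :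
    SuffScattered H := by
  exact anchor_points_imply_sufficiently_scattered_general H hanchor
end

section
/- Let Q be a real orthogonal C×C matrix such that every standard basis vector e_i of ℝ^C lies in cone(Q), the conical hull of the columns of Q (equivalently, the nonnegative orthant of ℝ^C is contained in cone(Q)). Then Q is a permutation matrix. -/
open Matrix BigOperators

/-!
If `e_i = Q α` with `α ≥ 0`, then `α = Qᵀ e_i` is the `i`-th row of `Q`. So `Q` is entrywise
nonnegative and `Q Qᵀ = 1`. Orthogonal nonnegative vectors have disjoint supports, so each row and
each column of `Q` has a single nonzero entry, which equals `1` because it squares to `1`.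
-/

section NonnegOrthogonal

variable {m n R : Type*} [Fintype m] [Fintype n] [Semiring R] [LinearOrder R]
  [IsStrictOrderedRing R]

theorem eq_zero_or_eq_zero_of_dotProduct_eq_zero {v w : n → R} (hv : 0 ≤ v) (hw : 0 ≤ w)
    (hvw : v ⬝ᵥ w = 0) (i : n) : v i = 0 ∨ w i = 0 := by
  have hprod : v i * w i = 0 :=
    (Finset.sum_eq_zero_iff_of_nonneg fun k _ => mul_nonneg (hv k) (hw k)).mp hvw i
      (Finset.mem_univ i)
  by_contra! hne
  exact (mul_pos ((hv i).lt_of_ne' hne.1) ((hw i).lt_of_ne' hne.2)).ne' hprod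

variable [DecidableEq m] [DecidableEq n] {Q : Matrix m n R}

theorem exists_col_eq_single_of_nonneg_of_orthogonal (hnn : ∀ i j, 0 ≤ Q i j)
    (hcol : Qᵀ * Q = 1) (hrow : Q * Qᵀ = 1) (j : n) : ∃ i, Q.col j = Pi.single i 1 := by
  have hnorm : ∑ k, Q k j * Q k j = 1 := by
    simpa only [mul_apply, transpose_apply, one_apply_eq] using congrFun₂ hcol j j
  obtain ⟨i, -, hi⟩ := Finset.exists_ne_zero_of_sum_ne_zero (hnorm.trans_ne one_ne_zero)
  have hzero : ∀ k, k ≠ i → Q k j = 0 := fun k hki =>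
    have horth : Q.row k ⬝ᵥ Q.row i = 0 := (congrFun₂ hrow k i).trans (one_apply_ne hki)
    (eq_zero_or_eq_zero_of_dotProduct_eq_zero (hnn k) (hnn i) horth j).resolve_right
      (left_ne_zero_of_mul hi)
  have hone : Q i j = 1 := by
    rw [Fintype.sum_eq_single i fun k hki => by rw [hzero k hki, zero_mul]] at hnorm
    exact (mul_self_inj (hnn i j) zero_le_one).mp (hnorm.trans (one_mul 1).symm)
  refine ⟨i, funext fun k => ?_⟩
  obtain rfl | hki := eq_or_ne k i
  · rw [col_apply, hone, Pi.single_eq_same]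
  · rw [col_apply, hzero k hki, Pi.single_eq_of_ne hki]

theorem exists_equiv_apply_eq_ite_of_nonneg_of_orthogonal (hnn : ∀ i j, 0 ≤ Q i j)
    (hcol : Qᵀ * Q = 1) (hrow : Q * Qᵀ = 1) :
    ∃ σ : n ≃ m, ∀ i j, Q i j = if i = σ j then 1 else 0 := by
  choose f hf using exists_col_eq_single_of_nonneg_of_orthogonal hnn hcol hrow
  choose g hg using
    exists_col_eq_single_of_nonneg_of_orthogonal (Q := Qᵀ) (fun j i => hnn i j) hrow hcol
  have hQf (i j) : Q i j = if i = f j then 1 else 0 :=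
    (congrFun (hf j) i).trans (Pi.single_apply ..)
  have hQg (i j) : Q i j = if j = g i then 1 else 0 :=
    (congrFun (hg i) j).trans (Pi.single_apply ..)
  have hfg (i j) : i = f j ↔ j = g i :=
    calc
      i = f j ↔ Q i j = 1 := by
        simp only [hQf, ite_eq_left_iff, zero_ne_one, imp_false, not_not]
      _ ↔ j = g i := by
        simp only [hQg, ite_eq_left_iff, zero_ne_one, imp_false, not_not]
  exact ⟨⟨f, g, fun j => ((hfg _ j).mp rfl).symm, fun i => ((hfg i _).mpr rfl).symm⟩, hQf⟩

end NonnegOrthogonal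

section Cone

variable {m n R : Type*} [Fintype m] [Fintype n] [DecidableEq m] [DecidableEq n]

theorem row_eq_of_single_eq_mulVec [Semiring R] {Q : Matrix m n R} (hQ : Qᵀ * Q = 1)
    {i : m} {α : n → R} (hα : Pi.single i 1 = Q *ᵥ α) : Q.row i = α :=
  calc
    Q.row i = Qᵀ *ᵥ Pi.single i 1 := by rw [mulVec_single_one, col_transpose]
    _ = α := by rw [hα, mulVec_mulVec, hQ, one_mulVec]

theorem orthogonal_cone_contains_orthant_is_perm_general [Semiring R] [LinearOrder R]
    [IsStrictOrderedRing R] (Q : Matrix m n R) (hQ : Qᵀ * Q = 1)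
    (hbasis : ∀ i : m, ∃ α : n → R, (∀ j, 0 ≤ α j) ∧ Pi.single i 1 = Q *ᵥ α) :
    ∃ σ : n ≃ m, ∀ i j, Q i j = if i = σ j then 1 else 0 := by
  choose α hα hsingle using hbasis
  have hrow_eq (i) : Q.row i = α i := row_eq_of_single_eq_mulVec hQ (hsingle i)
  have hnn (i j) : 0 ≤ Q i j := (hα i j).trans_eq (congrFun (hrow_eq i) j).symm
  have hrow : Q * Qᵀ = 1 := ext_of_mulVec_single fun i => by
    rw [← mulVec_mulVec, mulVec_single_one, col_transpose, hrow_eq, ← hsingle, one_mulVec]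
  exact exists_equiv_apply_eq_ite_of_nonneg_of_orthogonal hnn hQ hrow

end Cone

/-- If an orthogonal matrix's cone contains the nonnegative orthant (equivalently, all
standard basis vectors), it is a permutation matrix. -/
theorem orthogonal_cone_contains_orthant_is_perm
    {C : ℕ} (Q : Matrix (Fin C) (Fin C) ℝ)
    (hQ : Qᵀ * Q = 1)
    (hbasis : ∀ i : Fin C, (Pi.single i 1 : Fin C → ℝ) ∈ coneOf Q) :
    IsPermMatrix Q :=
  orthogonal_cone_contains_orthant_is_perm_general Q hQ hbasis
end

section
/- Let A be a real C×C matrix such that every column satisfies ‖A_{:,i}‖₂ ≤ ∑_{j=1}^C A_{ji} (the Euclidean norm of each column is at most its entrywise sum), and suppose the total sum of all entries of A equals C, i.e. 𝟙ᵀA𝟙 = C. Then |det A| ≤ 1. -/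
/-!
Hadamard's inequality bounds `|det A|` by the product of the column norms, and AM–GM bounds that
product by the `C`-th power of their mean. The column condition bounds the mean by the total entry
sum divided by `C`, which is `1`.

Hadamard's inequality itself comes from measuring the columns in the orthonormal basis that
Gram–Schmidt attaches to them: in it the determinant is the product of the diagonal coordinates
`⟪b i, v i⟫`, each at most `‖v i‖`, and a change of orthonormal basis does not affect `|det|`.
-/

open Matrix BigOperators

section Hadamard

variable {𝕜 ι : Type*} [RCLike 𝕜] [Fintype ι] [DecidableEq ι]
variable {E : Type*} [NormedAddCommGroup E] [InnerProductSpace 𝕜 E]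

theorem exists_orthonormalBasis_det_eq_prod_inner [FiniteDimensional 𝕜 E]
    (hι : Module.finrank 𝕜 E = Fintype.card ι) (v : ι → E) :
    ∃ b : OrthonormalBasis ι 𝕜 E, b.toBasis.det v = ∏ i, inner 𝕜 (b i) (v i) := by
  -- Gram–Schmidt needs an ordered index type, so it is run on an enumeration of `ι`.
  let e := Fintype.equivFin ι
  have hn : Module.finrank 𝕜 E = Fintype.card (Fin (Fintype.card ι)) := by
    rw [hι, Fintype.card_fin]
  let b := InnerProductSpace.gramSchmidtOrthonormalBasis hn (v ∘ e.symm)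
  have hb : b.toBasis.det (v ∘ e.symm) = ∏ k, inner 𝕜 (b k) (v (e.symm k)) :=
    InnerProductSpace.gramSchmidtOrthonormalBasis_det hn (v ∘ e.symm)
  refine ⟨b.reindex e.symm, ?_⟩
  rw [OrthonormalBasis.reindex_toBasis, Module.Basis.det_reindex, hb]
  exact Fintype.prod_equiv e.symm _ _ fun k => by simp

theorem norm_det_eq_norm_det_of_orthonormalBasis (b c : OrthonormalBasis ι 𝕜 E) (v : ι → E) :
    ‖b.toBasis.det v‖ = ‖c.toBasis.det v‖ := by
  have hdet : b.toBasis.det v = b.toBasis.det c * c.toBasis.det v := by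
    simpa only [AlternatingMap.smul_apply, smul_eq_mul, c.coe_toBasis] using
      congrArg (· v) (b.toBasis.det.eq_smul_basis_det c.toBasis)
  rw [hdet, norm_mul, b.det_to_matrix_orthonormalBasis, one_mul]

theorem norm_orthonormalBasis_det_le_prod_norm (b : OrthonormalBasis ι 𝕜 E) (v : ι → E) :
    ‖b.toBasis.det v‖ ≤ ∏ i, ‖v i‖ := by
  have : FiniteDimensional 𝕜 E := b.toBasis.finiteDimensional_of_finite
  obtain ⟨c, hc⟩ :=
    exists_orthonormalBasis_det_eq_prod_inner (Module.finrank_eq_card_basis b.toBasis) v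
  calc
    ‖b.toBasis.det v‖ = ‖c.toBasis.det v‖ := norm_det_eq_norm_det_of_orthonormalBasis b c v
    _ = ∏ i, ‖inner 𝕜 (c i) (v i)‖ := by rw [hc, norm_prod]
    _ ≤ ∏ i, ‖c i‖ * ‖v i‖ :=
      Finset.prod_le_prod (fun _ _ => norm_nonneg _) fun _ _ => norm_inner_le_norm _ _
    _ = ∏ i, ‖v i‖ := by simp only [c.norm_eq_one, one_mul]

theorem norm_det_le_prod_norm_col (A : Matrix ι ι 𝕜) :
    ‖A.det‖ ≤ ∏ i, ‖WithLp.toLp 2 (A.col i)‖ := by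
  have hdet : (EuclideanSpace.basisFun ι 𝕜).toBasis.det (fun i => WithLp.toLp 2 (A.col i)) =
      A.det := by
    rw [Module.Basis.det_apply]
    congr 1
  rw [← hdet]
  exact norm_orthonormalBasis_det_le_prod_norm _ _

end Hadamard

theorem prod_le_sum_div_card_pow {ι : Type*} (s : Finset ι) {z : ι → ℝ}
    (hz : ∀ i ∈ s, 0 ≤ z i) : ∏ i ∈ s, z i ≤ ((∑ i ∈ s, z i) / s.card) ^ s.card := by
  rcases s.eq_empty_or_nonempty with rfl | hs
  · simp
  have hcard : (0 : ℝ) < s.card := by exact_mod_cast hs.card_pos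
  have hmean : (∏ i ∈ s, z i) ^ (s.card : ℝ)⁻¹ ≤ (∑ i ∈ s, z i) / s.card := by
    simpa using Real.geom_mean_le_arith_mean s (fun _ => 1) z (by simp) (by simpa using hcard) hz
  calc
    ∏ i ∈ s, z i = ((∏ i ∈ s, z i) ^ (s.card : ℝ)⁻¹) ^ s.card :=
      (Real.rpow_inv_natCast_pow (Finset.prod_nonneg hz) hs.card_ne_zero).symm
    _ ≤ ((∑ i ∈ s, z i) / s.card) ^ s.card :=
      pow_le_pow_left₀ (Real.rpow_nonneg (Finset.prod_nonneg hz) _) hmean _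

theorem abs_det_le_one_of_col_norm_le_sum_general {𝕜 ι : Type*} [RCLike 𝕜] [Fintype ι]
    [DecidableEq ι] (A : Matrix ι ι 𝕜)
    (hA : ∑ i, ‖WithLp.toLp 2 (A.col i)‖ ≤ Fintype.card ι) : ‖A.det‖ ≤ 1 :=
  calc
    ‖A.det‖ ≤ ∏ i, ‖WithLp.toLp 2 (A.col i)‖ := norm_det_le_prod_norm_col A
    _ ≤ ((∑ i, ‖WithLp.toLp 2 (A.col i)‖) / Fintype.card ι) ^ Fintype.card ι :=
      prod_le_sum_div_card_pow Finset.univ fun _ _ => norm_nonneg _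
    _ ≤ 1 := pow_le_one₀ (by positivity) (div_le_one_of_le₀ hA (Nat.cast_nonneg _))

theorem euclNorm_eq_norm_toLp {C : ℕ} (v : Fin C → ℝ) : euclNorm v = ‖WithLp.toLp 2 v‖ := by
  simp only [euclNorm, EuclideanSpace.norm_eq, Real.norm_eq_abs, sq_abs]

theorem sum_norm_col_le_sum_entries {C : ℕ} {A : Matrix (Fin C) (Fin C) ℝ}
    (hcol : ∀ i, euclNorm (A.col i) ≤ ∑ j, A j i) :
    ∑ i, ‖WithLp.toLp 2 (A.col i)‖ ≤ ∑ i, ∑ j, A i j :=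
  calc
    ∑ i, ‖WithLp.toLp 2 (A.col i)‖ ≤ ∑ i, ∑ j, A j i :=
      Finset.sum_le_sum fun i _ => (euclNorm_eq_norm_toLp (A.col i)).symm.trans_le (hcol i)
    _ = ∑ i, ∑ j, A i j := Finset.sum_comm

/-- Determinant bound: if each column's Euclidean norm is at most its entrywise sum and
the total entry sum is `C`, then `|det A| ≤ 1`. -/
theorem abs_det_le_one_of_col_norm_le_sum
    {C : ℕ} (A : Matrix (Fin C) (Fin C) ℝ)
    (hcol : ∀ i : Fin C, euclNorm (fun j => A j i) ≤ ∑ j, A j i)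
    (htotal : ∑ i, ∑ j, A i j = (C : ℝ)) :
    |A.det| ≤ 1 := by
  refine abs_det_le_one_of_col_norm_le_sum_general A ?_
  simpa only [htotal, Fintype.card_fin] using sum_norm_col_le_sum_entries hcol
end

section
/- Let T be a real C×C matrix satisfying T_ii > T_ji for all j ≠ i (each diagonal entry is the strict maximum of its column), and let Π be a C×C permutation matrix such that the matrix ΠT also satisfies (ΠT)_ii > (ΠT)_ji for all j ≠ i. Then Π is the identity matrix. -/
open Matrix BigOperators

theorem eq_id_of_surjective_of_forall_apply_le {ι α : Type*} [Preorder α] {A : ι → ι → α}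
    {f : ι → ι} (hA : ∀ i j, j ≠ i → A j i < A i i) (hf : Function.Surjective f)
    (hfA : ∀ i j, A (f j) i ≤ A (f i) i) : f = id := by
  funext i
  obtain ⟨j, hj⟩ := hf i
  have hle : A i i ≤ A (f i) i := by simpa only [hj] using hfA i j
  by_contra hne
  exact (hA i (f i) hne).not_ge hle

theorem IsPermMatrix.exists_eq_permMatrix {C : ℕ} {Q : Matrix (Fin C) (Fin C) ℝ}
    (hQ : IsPermMatrix Q) : ∃ σ : Equiv.Perm (Fin C), Q = σ.permMatrix ℝ := by
  obtain ⟨σ, hσ⟩ := hQ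
  refine ⟨σ⁻¹, Matrix.ext fun i j => ?_⟩
  simp [hσ, PEquiv.toMatrix_apply, Equiv.toPEquiv_apply, Equiv.symm_apply_eq]

theorem DiagDominant.apply_le_diag {C : ℕ} {T : Matrix (Fin C) (Fin C) ℝ}
    (hT : DiagDominant T) (i j : Fin C) : T j i ≤ T i i := by
  obtain rfl | hji := eq_or_ne j i
  · exact le_rfl
  · exact (hT i j hji).le

theorem perm_of_diag_dominant_is_id_general {n R : Type*} [Fintype n] [DecidableEq n]
    [NonAssocSemiring R] [Preorder R] {T : Matrix n n R} {σ : Equiv.Perm n}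
    (hT : ∀ i j, j ≠ i → T j i < T i i)
    (hσT : ∀ i j, (σ.permMatrix R * T) j i ≤ (σ.permMatrix R * T) i i) :
    σ = 1 := by
  simp only [PEquiv.toMatrix_toPEquiv_mul, Matrix.submatrix_apply, id] at hσT
  exact DFunLike.coe_injective
    (eq_id_of_surjective_of_forall_apply_le hT σ.surjective hσT)

/-- If both `T` and `Π * T` are diagonally dominant and `Π` is a permutation matrix,
then `Π` is the identity. -/
theorem perm_of_diag_dominant_is_id
    {C : ℕ} (T Pi : Matrix (Fin C) (Fin C) ℝ)
    (hT : DiagDominant T)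
    (hPi : IsPermMatrix Pi)
    (hPiT : DiagDominant (Pi * T)) :
    Pi = 1 := by
  obtain ⟨σ, rfl⟩ := hPi.exists_eq_permMatrix
  rw [perm_of_diag_dominant_is_id_general hT hPiT.apply_le_diag, Matrix.permMatrix_one]
end
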